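/- arXiv:2512.11085 — 2 statements merged into one kernel-verified Lean document; each statement's English description precedes it below -/
import Mathlib

section
/- Let d ≥ 2 and let Ξ(u) = -(2/(d-1)) ∫_{S^{d-1}} (Σ_{i=1}^d u_i z_i²)^{-(d-1)/2} dη(z), where η is the uniform probability measure on the unit sphere S^{d-1} and u ∈ ℝ_{>0}^d. Then for every u ∈ ℝ_{>0}^d and every unit vector w ∈ ℝ^d, the quadratic form of the Hessian satisfies wᵀ∇²Ξ(u)w = -((d+1)/2) ∫_{S^{d-1}} (Σ_i w_i z_i²)² (Σ_k u_k z_k²)^{-(d+3)/2} dη(z) < 0; in particular Ξ is strictly concave on ℝ_{>0}^d. -/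
open MeasureTheory

/-- The uniform (normalized Hausdorff) probability measure on the unit sphere
`S^{d-1} ⊆ ℝ^d`. -/
noncomputable def sphereUniform (d : ℕ) : Measure (EuclideanSpace ℝ (Fin d)) :=
  ((μH[(d : ℝ) - 1] (Metric.sphere (0 : EuclideanSpace ℝ (Fin d)) 1))⁻¹ : ENNReal) •
    (μH[(d : ℝ) - 1]).restrict (Metric.sphere (0 : EuclideanSpace ℝ (Fin d)) 1)

/-- The function `Ξ(u) = -(2/(d-1)) ∫_{S^{d-1}} (Σ_i u_i z_i²)^{-(d-1)/2} dη(z)`. -/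
noncomputable def Xi (d : ℕ) (u : EuclideanSpace ℝ (Fin d)) : ℝ :=
  -(2 / ((d : ℝ) - 1)) *
    ∫ z, (∑ i, u i * z i ^ 2) ^ (-((d : ℝ) - 1) / 2) ∂(sphereUniform d)


/-- The map sending `y` to the direction of the vector with `i`-th coordinate `1` and remaining
coordinates `y`. -/
noncomputable def gnomonicChart {n : ℕ} (i : Fin (n + 1)) (y : Fin n → ℝ) :
    EuclideanSpace ℝ (Fin (n + 1)) :=
  let v : EuclideanSpace ℝ (Fin (n + 1)) := WithLp.toLp 2 (i.insertNth 1 y)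
  ‖v‖⁻¹ • v

lemma contDiff_gnomonicChart {n : ℕ} (i : Fin (n + 1)) : ContDiff ℝ 1 (gnomonicChart i) := by
  have hv : ContDiff ℝ 1 (fun y : Fin n → ℝ =>
      (WithLp.toLp 2 (i.insertNth 1 y) : EuclideanSpace ℝ (Fin (n + 1)))) := by
    rw [contDiff_euclidean]
    intro j
    refine Fin.succAboveCases i ?_ (fun k => ?_) j
    · simpa using contDiff_const
    · simpa using contDiff_apply ℝ ℝ k
  have hne : ∀ y : Fin n → ℝ,
      (WithLp.toLp 2 (i.insertNth 1 y) : EuclideanSpace ℝ (Fin (n + 1))) ≠ 0 := by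
    intro y h
    have := congrArg (fun v : EuclideanSpace ℝ (Fin (n + 1)) => v i) h
    simp at this
  exact ((hv.norm ℝ hne).inv fun y => norm_ne_zero_iff.2 (hne y)).smul hv

lemma sphere_subset_iUnion_gnomonicChart (n : ℕ) :
    Metric.sphere (0 : EuclideanSpace ℝ (Fin (n + 1))) 1 ⊆
      ⋃ i : Fin (n + 1), (gnomonicChart i '' Metric.closedBall 0 1 ∪
        (fun y => -gnomonicChart i y) '' Metric.closedBall 0 1) := by
  intro z hz
  have hz1 : ‖z‖ = 1 := by simpa using hz
  obtain ⟨i, hi⟩ := Finite.exists_max (fun i => |z i|)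
  have hzi : z i ≠ 0 := by
    intro h
    have : z = 0 := by
      ext j
      have := hi j
      rw [h, abs_zero] at this
      simpa using abs_nonpos_iff.1 this
    simp [this] at hz1
  have hy : (fun j => z (i.succAbove j) / z i) ∈ Metric.closedBall (0 : Fin n → ℝ) 1 := by
    rw [mem_closedBall_zero_iff, pi_norm_le_iff_of_nonneg zero_le_one]
    intro j
    rw [Real.norm_eq_abs, abs_div]
    exact div_le_one_of_le₀ (hi _) (abs_nonneg _)
  have hv : (WithLp.toLp 2 (i.insertNth 1 fun j => z (i.succAbove j) / z i) :
      EuclideanSpace ℝ (Fin (n + 1))) = (z i)⁻¹ • z := by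
    ext j
    refine Fin.succAboveCases i ?_ (fun k => ?_) j
    · simp [hzi]
    · simp [div_eq_inv_mul]
  have hchart : gnomonicChart i (fun j => z (i.succAbove j) / z i) = (|z i| * (z i)⁻¹) • z := by
    simp only [gnomonicChart, hv, norm_smul, hz1, smul_smul]
    simp
  refine Set.mem_iUnion.2 ⟨i, ?_⟩
  rcases lt_or_gt_of_ne hzi with h | h
  · refine Or.inr ⟨_, hy, ?_⟩
    simp [hchart, abs_of_neg h, hzi]
  · refine Or.inl ⟨_, hy, ?_⟩
    simp [hchart, abs_of_pos h, hzi]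

lemma hausdorffMeasure_image_closedBall_lt_top {n : ℕ} {F : Type*} [NormedAddCommGroup F]
    [NormedSpace ℝ F] [MeasurableSpace F] [BorelSpace F] {f : (Fin n → ℝ) → F}
    (hf : ContDiff ℝ 1 f) (r : ℝ) : μH[(n : ℝ)] (f '' Metric.closedBall 0 r) < ⊤ := by
  have hK : IsCompact (Metric.closedBall (0 : Fin n → ℝ) r) := isCompact_closedBall 0 r
  obtain ⟨K, hLip⟩ :=
    (hf.locallyLipschitz.locallyLipschitzOn).exists_lipschitzOnWith_of_compact hK
  refine (hLip.hausdorffMeasure_image_le (Nat.cast_nonneg n)).trans_lt ?_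
  have : (μH[(n : ℝ)] : Measure (Fin n → ℝ)) = volume := by
    simpa using hausdorffMeasure_pi_real (ι := Fin n)
  rw [this, ENNReal.rpow_natCast]
  exact ENNReal.mul_lt_top (ENNReal.pow_lt_top ENNReal.coe_lt_top) hK.measure_lt_top

lemma hausdorffMeasure_sphere_lt_top (n : ℕ) :
    μH[(n : ℝ)] (Metric.sphere (0 : EuclideanSpace ℝ (Fin (n + 1))) 1) < ⊤ := by
  refine (measure_mono (sphere_subset_iUnion_gnomonicChart n)).trans_lt ?_
  refine (measure_iUnion_fintype_le _ _).trans_lt (ENNReal.sum_lt_top.2 fun i _ => ?_)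
  exact measure_union_lt_top
    (hausdorffMeasure_image_closedBall_lt_top (contDiff_gnomonicChart i) 1)
    (hausdorffMeasure_image_closedBall_lt_top (contDiff_gnomonicChart i).neg 1)

/-- The graph parametrization of the open hemisphere around the `i`-th basis vector. -/
noncomputable def hemisphereChart {n : ℕ} (i : Fin (n + 1)) (y : Fin n → ℝ) :
    EuclideanSpace ℝ (Fin (n + 1)) :=
  WithLp.toLp 2 (i.insertNth (√(1 - ∑ j, y j ^ 2)) y)

lemma continuous_hemisphereChart {n : ℕ} (i : Fin (n + 1)) : Continuous (hemisphereChart i) := by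
  refine (PiLp.continuous_toLp 2 _).comp (continuous_pi fun j => ?_)
  refine Fin.succAboveCases i ?_ (fun k => ?_) j
  · simp only [Fin.insertNth_apply_same]
    fun_prop
  · simpa using continuous_apply k

lemma hemisphereChart_mem_sphere {n : ℕ} (i : Fin (n + 1)) {y : Fin n → ℝ}
    (hy : ∑ j, y j ^ 2 < 1) : hemisphereChart i y ∈ Metric.sphere 0 1 := by
  rw [mem_sphere_zero_iff_norm, ← sq_eq_sq₀ (norm_nonneg _) zero_le_one, EuclideanSpace.norm_sq_eq,
    Fin.sum_univ_succAbove _ i]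
  simp [hemisphereChart, Real.sq_sqrt (sub_nonneg.2 hy.le)]

/-- A neighbourhood of a basis vector meets the sphere in a set of positive measure. -/
lemma hausdorffMeasure_inter_sphere_pos {n : ℕ} (i : Fin (n + 1))
    {U : Set (EuclideanSpace ℝ (Fin (n + 1)))} (hU : U ∈ nhds (EuclideanSpace.single i (1 : ℝ))) :
    0 < μH[(n : ℝ)] (U ∩ Metric.sphere 0 1) := by
  have h0 : hemisphereChart i 0 = EuclideanSpace.single i (1 : ℝ) := by
    ext j
    refine Fin.succAboveCases i ?_ (fun k => ?_) j <;> simp [hemisphereChart]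
  have hV : hemisphereChart i ⁻¹' U ∩ {y | ∑ j, y j ^ 2 < 1} ∈ nhds (0 : Fin n → ℝ) := by
    refine Filter.inter_mem ((continuous_hemisphereChart i).continuousAt (h0 ▸ hU)) ?_
    exact (isOpen_lt (by fun_prop) continuous_const).mem_nhds (by simp)
  let π : EuclideanSpace ℝ (Fin (n + 1)) → Fin n → ℝ := fun z j => z (i.succAbove j)
  have hπ : LipschitzWith 1 π := by
    refine LipschitzWith.of_dist_le_mul fun x y => ?_
    rw [NNReal.coe_one, one_mul, dist_pi_le_iff dist_nonneg]
    intro j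
    simpa [π, dist_eq_norm] using PiLp.norm_apply_le (x - y) (i.succAbove j)
  have hsub : hemisphereChart i ⁻¹' U ∩ {y | ∑ j, y j ^ 2 < 1} ⊆
      π '' (U ∩ Metric.sphere 0 1) := by
    rintro y ⟨hyU, hy⟩
    exact ⟨_, ⟨hyU, hemisphereChart_mem_sphere i hy⟩, by ext j; simp [π, hemisphereChart]⟩
  have hvol : (μH[(n : ℝ)] : Measure (Fin n → ℝ)) = volume := by
    simpa using hausdorffMeasure_pi_real (ι := Fin n)
  calc 0 < volume (hemisphereChart i ⁻¹' U ∩ {y | ∑ j, y j ^ 2 < 1}) :=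
        Measure.measure_pos_of_mem_nhds _ hV
    _ ≤ μH[(n : ℝ)] (π '' (U ∩ Metric.sphere 0 1)) := by
        rw [← hvol]; exact measure_mono hsub
    _ ≤ μH[(n : ℝ)] (U ∩ Metric.sphere 0 1) := by
        simpa using hπ.hausdorffMeasure_image_le (Nat.cast_nonneg n) (U ∩ Metric.sphere 0 1)

lemma strictConvexOn_rpow_of_neg {p : ℝ} (hp : p < 0) :
    StrictConvexOn ℝ (Set.Ioi 0) fun x : ℝ => x ^ p := by
  have hcont (q : ℝ) : ContinuousOn (fun x : ℝ => x ^ q) (Set.Ioi 0) :=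
    fun x hx => (Real.continuousAt_rpow_const x q (Or.inl (ne_of_gt hx))).continuousWithinAt
  refine StrictMonoOn.strictConvexOn_of_deriv (convex_Ioi 0) (hcont p) ?_
  rw [interior_Ioi]
  intro x hx y hy hxy
  rw [Real.deriv_rpow_const, Real.deriv_rpow_const]
  exact mul_lt_mul_of_neg_left (Real.rpow_lt_rpow_of_neg hx hxy (by linarith)) hp

instance isFiniteMeasure_sphereUniform (d : ℕ) [NeZero d] :
    IsFiniteMeasure (sphereUniform d) := by
  obtain ⟨n, rfl⟩ := Nat.exists_eq_succ_of_ne_zero (NeZero.ne d)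
  have hn : ((n + 1 : ℕ) : ℝ) - 1 = n := by push_cast; ring
  have hpos : 0 < μH[(n : ℝ)] (Metric.sphere (0 : EuclideanSpace ℝ (Fin (n + 1))) 1) := by
    simpa using hausdorffMeasure_inter_sphere_pos (0 : Fin (n + 1)) Filter.univ_mem
  refine ⟨?_⟩
  simp only [sphereUniform, Nat.succ_eq_add_one, hn, Measure.smul_apply, smul_eq_mul,
    Measure.restrict_apply_univ]
  exact ENNReal.mul_lt_top (ENNReal.inv_lt_top.2 hpos) (hausdorffMeasure_sphere_lt_top n)

lemma sphereUniform_restrict_sphere (d : ℕ) :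
    (sphereUniform d).restrict (Metric.sphere 0 1) = sphereUniform d := by
  rw [sphereUniform, Measure.restrict_smul, 
    Measure.restrict_restrict Metric.isClosed_sphere.measurableSet,
    Set.inter_self]

lemma ae_sphereUniform_mem_sphere (d : ℕ) :
    ∀ᵐ z ∂(sphereUniform d), z ∈ Metric.sphere (0 : EuclideanSpace ℝ (Fin d)) 1 := by
  rw [← sphereUniform_restrict_sphere]
  exact ae_restrict_mem Metric.isClosed_sphere.measurableSet

lemma sphereUniform_pos_of_mem_nhds {d : ℕ} (i : Fin d) {U : Set (EuclideanSpace ℝ (Fin d))}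
    (hU : U ∈ nhds (EuclideanSpace.single i (1 : ℝ))) : 0 < sphereUniform d U := by
  obtain ⟨n, rfl⟩ := Nat.exists_eq_succ_of_ne_zero (Fin.pos i).ne'
  have hn : ((n + 1 : ℕ) : ℝ) - 1 = n := by push_cast; ring
  simp only [sphereUniform, Nat.succ_eq_add_one, hn, Measure.smul_apply, smul_eq_mul,
    Measure.restrict_apply' Metric.isClosed_sphere.measurableSet]
  exact ENNReal.mul_pos (ENNReal.inv_ne_zero.2 (hausdorffMeasure_sphere_lt_top n).ne)
    (hausdorffMeasure_inter_sphere_pos i hU).ne'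

lemma integrable_sphereUniform {d : ℕ} [NeZero d] {F : Type*} [NormedAddCommGroup F]
    {f : EuclideanSpace ℝ (Fin d) → F} (hf : ContinuousOn f (Metric.sphere 0 1)) :
    Integrable f (sphereUniform d) := by
  rw [← sphereUniform_restrict_sphere]
  exact hf.integrableOn_compact (isCompact_sphere 0 1)

/-- The linear form `u ↦ ∑ i, u i * z i ^ 2`. -/
noncomputable def sqForm {d : ℕ} (z : EuclideanSpace ℝ (Fin d)) :
    EuclideanSpace ℝ (Fin d) →L[ℝ] ℝ :=
  ∑ i, (z i ^ 2) • EuclideanSpace.proj i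

lemma sqForm_apply {d : ℕ} (z u : EuclideanSpace ℝ (Fin d)) :
    sqForm z u = ∑ i, u i * z i ^ 2 := by
  simp [sqForm, mul_comm]

lemma continuous_sqForm {d : ℕ} :
    Continuous (sqForm : EuclideanSpace ℝ (Fin d) → EuclideanSpace ℝ (Fin d) →L[ℝ] ℝ) := by
  unfold sqForm
  fun_prop

lemma continuous_sqForm_smulRight {d : ℕ} {F : Type*} [NormedAddCommGroup F] [NormedSpace ℝ F]
    {g : EuclideanSpace ℝ (Fin d) → F} (hg : Continuous g) :
    Continuous fun z => (sqForm z).smulRight (g z) :=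
  (ContinuousLinearMap.smulRightL ℝ (EuclideanSpace ℝ (Fin d)) F).continuous₂.comp
    (continuous_sqForm.prodMk hg)

lemma sqForm_pos {d : ℕ} {z u : EuclideanSpace ℝ (Fin d)} (hu : ∀ i, 0 < u i)
    (hz : z ∈ Metric.sphere (0 : EuclideanSpace ℝ (Fin d)) 1) : 0 < sqForm z u := by
  rw [sqForm_apply]
  obtain ⟨i, hi⟩ : ∃ i, z i ≠ 0 := by
    by_contra! h
    have : z = 0 := by ext i; simpa using h i
    simp [this] at hz
  exact Finset.sum_pos' (fun j _ => mul_nonneg (hu j).le (sq_nonneg _))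
    ⟨i, Finset.mem_univ i, mul_pos (hu i) (by positivity)⟩

lemma sphereUniform_sqForm_ne_zero_pos {d : ℕ} {w : EuclideanSpace ℝ (Fin d)} (hw : w ≠ 0) :
    0 < sphereUniform d {z | sqForm z w ≠ 0} := by
  obtain ⟨i, hi⟩ : ∃ i, w i ≠ 0 := by
    by_contra! h
    exact hw (by ext i; simpa using h i)
  refine sphereUniform_pos_of_mem_nhds i (IsOpen.mem_nhds ?_ ?_)
  · exact isOpen_ne_fun (continuous_sqForm.clm_apply continuous_const) continuous_const
  · simpa [sqForm_apply, Pi.single_apply] using hi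

lemma isOpen_positiveOrthant (d : ℕ) : IsOpen {u : EuclideanSpace ℝ (Fin d) | ∀ i, 0 < u i} := by
  simp only [Set.ofPred_forall]
  exact isOpen_iInter_of_finite fun i => isOpen_lt continuous_const (by fun_prop)

lemma continuousOn_sqForm_rpow (d : ℕ) (p : ℝ) :
    ContinuousOn (fun x : EuclideanSpace ℝ (Fin d) × EuclideanSpace ℝ (Fin d) =>
      sqForm x.2 x.1 ^ p) ({u | ∀ i, 0 < u i} ×ˢ Metric.sphere 0 1) := by
  refine ContinuousOn.rpow_const ?_ fun x hx => Or.inl (sqForm_pos hx.1 hx.2).ne'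
  exact ((continuous_sqForm.comp continuous_snd).clm_apply continuous_fst).continuousOn

lemma integrable_sqForm_rpow_smul {d : ℕ} [NeZero d] {F : Type*} [NormedAddCommGroup F]
    [NormedSpace ℝ F] {g : EuclideanSpace ℝ (Fin d) → F} (hg : Continuous g) (p : ℝ)
    {u : EuclideanSpace ℝ (Fin d)} (hu : ∀ i, 0 < u i) :
    Integrable (fun z => sqForm z u ^ p • g z) (sphereUniform d) := by
  refine integrable_sphereUniform (ContinuousOn.smul ?_ hg.continuousOn)
  exact (continuousOn_sqForm_rpow d p).comp (f := fun z => (u, z)) (by fun_prop)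
    fun z hz => ⟨hu, hz⟩

lemma hasFDerivAt_integral_sqForm_rpow_smul {d : ℕ} [NeZero d] {F : Type*}
    [NormedAddCommGroup F] [NormedSpace ℝ F] {g : EuclideanSpace ℝ (Fin d) → F}
    (hg : Continuous g) (p : ℝ) {u : EuclideanSpace ℝ (Fin d)} (hu : ∀ i, 0 < u i) :
    HasFDerivAt (fun v => ∫ z, sqForm z v ^ p • g z ∂(sphereUniform d))
      (∫ z, sqForm z u ^ (p - 1) • (sqForm z).smulRight (p • g z) ∂(sphereUniform d)) u := by
  have hg' : Continuous fun z => (sqForm z).smulRight (p • g z) :=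
    continuous_sqForm_smulRight (hg.const_smul p)
  obtain ⟨ε, hε, hball⟩ := Metric.nhds_basis_closedBall.mem_iff.1
    ((isOpen_positiveOrthant d).mem_nhds hu)
  have hcompact := (isCompact_closedBall u ε).prod
    (isCompact_sphere (0 : EuclideanSpace ℝ (Fin d)) 1)
  obtain ⟨C, hC⟩ := hcompact.exists_bound_of_continuousOn
    (((continuousOn_sqForm_rpow d (p - 1)).mono (Set.prod_mono_left hball)).smul
      (hg'.comp continuous_snd).continuousOn)
  refine hasFDerivAt_integral_of_dominated_of_fderiv_le
    (F' := fun v z => sqForm z v ^ (p - 1) • (sqForm z).smulRight (p • g z))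
    (bound := fun _ => C) (Metric.closedBall_mem_nhds u hε) ?_
    (integrable_sqForm_rpow_smul hg p hu)
    (integrable_sqForm_rpow_smul hg' (p - 1) hu).aestronglyMeasurable ?_ (integrable_const C) ?_
  · filter_upwards [(isOpen_positiveOrthant d).mem_nhds hu] with v hv
    exact (integrable_sqForm_rpow_smul hg p hv).aestronglyMeasurable
  · filter_upwards [ae_sphereUniform_mem_sphere d] with z hz v hv
    exact hC (v, z) ⟨hv, hz⟩
  · filter_upwards [ae_sphereUniform_mem_sphere d] with z hz v hv
    have h := (((sqForm z).hasFDerivAt (x := v)).rpow_const (p := p)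
      (Or.inl (sqForm_pos (hball hv) hz).ne')).smul_const (g z)
    convert h using 1
    ext x
    simp only [smul_apply, ContinuousLinearMap.smulRight_apply, smul_smul,
      smul_eq_mul]
    congr 1
    ring

lemma Xi_eq_integral_sqForm (d : ℕ) : Xi d = fun u =>
    -(2 / ((d : ℝ) - 1)) •
      ∫ z, sqForm z u ^ (-((d : ℝ) - 1) / 2) • (1 : ℝ) ∂(sphereUniform d) := by
  ext u
  simp [Xi, sqForm_apply]

lemma iteratedFDeriv_two_integral_sqForm_rpow {d : ℕ} [NeZero d] (p : ℝ)
    {u : EuclideanSpace ℝ (Fin d)} (hu : ∀ i, 0 < u i) (w : EuclideanSpace ℝ (Fin d)) (c : ℝ) :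
    iteratedFDeriv ℝ 2 (fun v => c • ∫ z, sqForm z v ^ p • (1 : ℝ) ∂(sphereUniform d)) u ![w, w] =
      c * (p * (p - 1)) * ∫ z, sqForm z w ^ 2 * sqForm z u ^ (p - 2) ∂(sphereUniform d) := by
  have hg : Continuous fun z : EuclideanSpace ℝ (Fin d) =>
      (sqForm z).smulRight (p • (1 : ℝ)) :=
    continuous_sqForm_smulRight continuous_const
  have hg' : Continuous fun z : EuclideanSpace ℝ (Fin d) =>
      (sqForm z).smulRight ((p - 1) • (sqForm z).smulRight (p • (1 : ℝ))) :=
    continuous_sqForm_smulRight (hg.const_smul (p - 1))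
  have hfirst : fderiv ℝ (fun v => c • ∫ z, sqForm z v ^ p • (1 : ℝ) ∂(sphereUniform d)) =ᶠ[nhds u]
      fun v => c • ∫ z, sqForm z v ^ (p - 1) • (sqForm z).smulRight (p • (1 : ℝ))
        ∂(sphereUniform d) := by
    filter_upwards [(isOpen_positiveOrthant d).mem_nhds hu] with v hv
    exact ((hasFDerivAt_integral_sqForm_rpow_smul continuous_const p hv).const_smul c).fderiv
  have hint := integrable_sqForm_rpow_smul
    (F := EuclideanSpace ℝ (Fin d) →L[ℝ] EuclideanSpace ℝ (Fin d) →L[ℝ] ℝ) hg' (p - 1 - 1) hu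
  rw [iteratedFDeriv_two_apply, hfirst.fderiv_eq,
    ((hasFDerivAt_integral_sqForm_rpow_smul hg (p - 1) hu).fun_const_smul c).fderiv]
  simp only [Matrix.cons_val_zero, Matrix.cons_val_one, smul_apply]
  rw [ContinuousLinearMap.integral_apply hint,
    ContinuousLinearMap.integral_apply (hint.apply_continuousLinearMap w), smul_eq_mul, mul_assoc,
    ← integral_const_mul (p * (p - 1))]
  congr 1
  refine integral_congr_ae (.of_forall fun z => ?_)
  rw [show p - 1 - 1 = p - 2 by ring]
  simp only [smul_apply, ContinuousLinearMap.smulRight_apply, smul_eq_mul]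
  ring

lemma integral_sqForm_sq_mul_rpow_pos {d : ℕ} [NeZero d] (p : ℝ)
    {u w : EuclideanSpace ℝ (Fin d)} (hu : ∀ i, 0 < u i) (hw : w ≠ 0) :
    0 < ∫ z, sqForm z w ^ 2 * sqForm z u ^ p ∂(sphereUniform d) := by
  have hint : Integrable (fun z => sqForm z w ^ 2 * sqForm z u ^ p) (sphereUniform d) := by
    have hg : Continuous fun z => sqForm z w ^ 2 :=
      (continuous_sqForm.clm_apply continuous_const).pow 2
    have := integrable_sqForm_rpow_smul hg p hu
    simpa only [smul_eq_mul, mul_comm] using this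
  rw [integral_pos_iff_support_of_nonneg_ae _ hint]
  · refine (sphereUniform_sqForm_ne_zero_pos hw).trans_le (measure_mono_ae ?_)
    filter_upwards [ae_sphereUniform_mem_sphere d] with z hz hzw
    exact mul_ne_zero (pow_ne_zero 2 hzw) (Real.rpow_pos_of_pos (sqForm_pos hu hz) p).ne'
  · filter_upwards [ae_sphereUniform_mem_sphere d] with z hz
    exact mul_nonneg (sq_nonneg _) (Real.rpow_pos_of_pos (sqForm_pos hu hz) p).le

lemma convex_positiveOrthant (d : ℕ) :
    Convex ℝ {u : EuclideanSpace ℝ (Fin d) | ∀ i, 0 < u i} := by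
  intro x hx y hy a b ha hb hab i
  exact (convex_Ioi (0 : ℝ)) (hx i) (hy i) ha hb hab

lemma strictConvexOn_integral_sqForm_rpow {d : ℕ} [NeZero d] {p : ℝ} (hp : p < 0) :
    StrictConvexOn ℝ {u : EuclideanSpace ℝ (Fin d) | ∀ i, 0 < u i}
      fun u => ∫ z, sqForm z u ^ p • (1 : ℝ) ∂(sphereUniform d) := by
  refine ⟨convex_positiveOrthant d, fun x hx y hy hxy a b ha hb hab => ?_⟩
  have hint {u : EuclideanSpace ℝ (Fin d)} (hu : ∀ i, 0 < u i) :=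
    integrable_sqForm_rpow_smul (continuous_const (y := (1 : ℝ))) p hu
  have hxyint : Integrable (fun z => a • (sqForm z x ^ p • (1 : ℝ)) +
      b • (sqForm z y ^ p • (1 : ℝ))) (sphereUniform d) :=
    ((hint hx).smul a).add ((hint hy).smul b)
  have hmid := hint (convex_positiveOrthant d hx hy ha.le hb.le hab)
  have hconv := strictConvexOn_rpow_of_neg hp
  rw [← sub_pos]
  have hsub : a • ∫ z, sqForm z x ^ p • (1 : ℝ) ∂(sphereUniform d) +
      b • ∫ z, sqForm z y ^ p • (1 : ℝ) ∂(sphereUniform d) -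
      ∫ z, sqForm z (a • x + b • y) ^ p • (1 : ℝ) ∂(sphereUniform d) =
      ∫ z, (a • (sqForm z x ^ p • (1 : ℝ)) + b • (sqForm z y ^ p • (1 : ℝ)) -
        sqForm z (a • x + b • y) ^ p • (1 : ℝ)) ∂(sphereUniform d) := by
    rw [integral_sub hxyint hmid, integral_add (by exact (hint hx).smul a)
      (by exact (hint hy).smul b), integral_smul, integral_smul]
  rw [hsub, integral_pos_iff_support_of_nonneg_ae _ (by exact hxyint.sub hmid)]
  · refine (sphereUniform_sqForm_ne_zero_pos (sub_ne_zero.2 hxy)).trans_le (measure_mono_ae ?_)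
    filter_upwards [ae_sphereUniform_mem_sphere d] with z hz hzw
    have hne : sqForm z x ≠ sqForm z y := by
      intro h
      exact hzw (by simp [h])
    have := hconv.2 (sqForm_pos hx hz) (sqForm_pos hy hz) hne ha hb hab
    refine ne_of_gt ?_
    simpa using this
  · filter_upwards [ae_sphereUniform_mem_sphere d] with z hz
    have := hconv.convexOn.2 (sqForm_pos hx hz) (sqForm_pos hy hz) ha.le hb.le hab
    simpa using this

/-- the Hessian quadratic form of `Ξ` at any `u ∈ ℝ_{>0}^d` and unit vector `w`
equals `-((d+1)/2) ∫ (Σ w_i z_i²)² (Σ u_k z_k²)^{-(d+3)/2} dη` and is negative; in particular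
`Ξ` is strictly concave on `ℝ_{>0}^d`. -/
theorem hessian_Xi_neg (d : ℕ) (hd : 2 ≤ d) :
    (∀ u : EuclideanSpace ℝ (Fin d), (∀ i, 0 < u i) →
      ∀ w : EuclideanSpace ℝ (Fin d), ‖w‖ = 1 →
        (iteratedFDeriv ℝ 2 (Xi d) u ![w, w] =
          -(((d : ℝ) + 1) / 2) *
            ∫ z, (∑ i, w i * z i ^ 2) ^ 2 * (∑ k, u k * z k ^ 2) ^ (-((d : ℝ) + 3) / 2)
              ∂(sphereUniform d) ∧
         iteratedFDeriv ℝ 2 (Xi d) u ![w, w] < 0)) ∧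
    StrictConcaveOn ℝ {u : EuclideanSpace ℝ (Fin d) | ∀ i, 0 < u i} (Xi d) := by
  have : NeZero d := ⟨by lia⟩
  have hd' : (0 : ℝ) < (d : ℝ) - 1 := by
    have : (2 : ℝ) ≤ d := by exact_mod_cast hd
    linarith
  refine ⟨fun u hu w hw => ?_, convex_positiveOrthant d, fun x hx y hy hxy a b ha hb hab => ?_⟩
  · have hw0 : w ≠ 0 := by
      rintro rfl
      simp at hw
    have heq : iteratedFDeriv ℝ 2 (Xi d) u ![w, w] = -(((d : ℝ) + 1) / 2) *
        ∫ z, sqForm z w ^ 2 * sqForm z u ^ (-((d : ℝ) + 3) / 2) ∂(sphereUniform d) := by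
      rw [Xi_eq_integral_sqForm, iteratedFDeriv_two_integral_sqForm_rpow _ hu,
        show -((d : ℝ) - 1) / 2 - 2 = -((d : ℝ) + 3) / 2 by ring]
      congr 1
      field_simp
      ring
    refine ⟨by simpa only [sqForm_apply] using heq, ?_⟩
    rw [heq]
    exact mul_neg_of_neg_of_pos (by linarith) (integral_sqForm_sq_mul_rpow_pos _ hu hw0)
  · have hlt := (strictConvexOn_integral_sqForm_rpow (d := d) (p := -((d : ℝ) - 1) / 2)
      (by linarith)).2 hx hy hxy ha hb hab
    have hc : 0 < 2 / ((d : ℝ) - 1) := by positivity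
    have := mul_lt_mul_of_pos_left hlt hc
    simp only [Xi_eq_integral_sqForm, smul_eq_mul] at this ⊢
    linarith
end

section
/- Let Λ be a symmetric positive definite d×d matrix and let p(x) = c · ‖x‖ · (2π)^{-d/2} (det Λ)^{-1/2} exp(-½ xᵀΛ^{-1}x) be a probability density on ℝ^d (with c the appropriate normalizing constant). Then the push-forward of p under the map x ↦ x/‖x‖ is absolutely continuous with respect to the uniform probability measure η on S^{d-1}, with density proportional to ζ ↦ (ζᵀΛ^{-1}ζ)^{-(d+1)/2}. -/
open MeasureTheory Matrix Real

section

open Metric Filter Topology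
open scoped Pointwise

/-- If all balls of radius `r n` have `μ`-measure `a n` and `ν`-measure `b n`, then the limit of
`a n / b n` bounds the ratio of `μ` to `ν` on open sets. -/
theorem measure_le_mul_of_tendsto_measure_ball_div {X : Type*} [PseudoMetricSpace X]
    [MeasurableSpace X] [BorelSpace X] [SecondCountableTopology X]
    (μ ν : Measure X) [IsFiniteMeasure μ] [IsFiniteMeasure ν]
    {r : ℕ → ℝ} (hr : Tendsto r atTop (𝓝 0)) {a b : ℕ → ENNReal} {K : ENNReal}
    (ha : ∀ n x, μ (ball x (r n)) = a n) (hb : ∀ n x, ν (ball x (r n)) = b n)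
    (hb0 : ∀ n, b n ≠ 0) (hbt : ∀ n, b n ≠ ⊤)
    (hK : Tendsto (fun n => a n / b n) atTop (𝓝 K))
    {U : Set X} (hU : IsOpen U) : μ U ≤ K * ν U := by
  have hmeas : ∀ n, MeasurableSet {q : X × X | dist q.1 q.2 < r n} := fun n =>
    (isOpen_lt (by fun_prop) continuous_const).measurableSet
  have hfst : ∀ n x, Prod.mk x ⁻¹' {q : X × X | dist q.1 q.2 < r n} = ball x (r n) := by
    intro n x; ext y; simp [dist_comm]
  have hsnd : ∀ n y, (fun x => (x, y)) ⁻¹' {q : X × X | dist q.1 q.2 < r n} = ball y (r n) := by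
    intro n y; ext x; simp
  have hfub : ∀ n, ∫⁻ x in U, ν.restrict U (ball x (r n)) ∂μ ≤ a n * ν U := by
    intro n
    have h1 := Measure.prod_apply (μ := μ.restrict U) (ν := ν.restrict U) (hmeas n)
    have h2 := Measure.prod_apply_symm (μ := μ.restrict U) (ν := ν.restrict U) (hmeas n)
    simp only [hfst] at h1
    simp only [hsnd] at h2
    rw [← h1, h2]
    calc _ ≤ ∫⁻ y in U, a n ∂ν := lintegral_mono fun y =>
          (Measure.restrict_apply_le _ _).trans (ha n y).le
      _ = a n * ν U := by simp
  have hlim : ∀ x ∈ U, liminf (fun n => ν.restrict U (ball x (r n)) / b n) atTop = 1 := by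
    intro x hx
    obtain ⟨ε, hε, hεU⟩ := Metric.isOpen_iff.1 hU x hx
    refine (tendsto_const_nhds.congr' ?_).liminf_eq
    filter_upwards [hr.eventually_lt_const hε] with n hn
    rw [Measure.restrict_apply measurableSet_ball,
      Set.inter_eq_left.2 ((ball_subset_ball hn.le).trans hεU), hb,
      ENNReal.div_self (hb0 n) (hbt n)]
  calc μ U = ∫⁻ x in U, liminf (fun n => ν.restrict U (ball x (r n)) / b n) atTop ∂μ := by
        rw [setLIntegral_congr_fun hU.measurableSet hlim]; simp
    _ ≤ liminf (fun n => ∫⁻ x in U, ν.restrict U (ball x (r n)) / b n ∂μ) atTop := by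
        refine lintegral_liminf_le fun n => ?_
        have := measurable_measure_prodMk_left (ν := ν.restrict U) (hmeas n)
        simp only [hfst] at this
        exact this.div_const _
    _ ≤ liminf (fun n => a n / b n * ν U) atTop := by
        refine liminf_le_liminf (Eventually.of_forall fun n => ?_)
        simp only [div_eq_mul_inv]
        rw [lintegral_mul_const' _ _ (ENNReal.inv_ne_top.2 (hb0 n)), mul_right_comm]
        gcongr
        exact hfub n
    _ = K * ν U := (ENNReal.Tendsto.mul_const hK (Or.inr (measure_ne_top _ _))).liminf_eq

theorem measure_ball_ne_zero_of_forall_eq {X : Type*} [PseudoMetricSpace X]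
    [MeasurableSpace X] [SecondCountableTopology X]
    {ν : Measure X} (hν : ν ≠ 0) {r : ℝ} (hr : 0 < r) {b : ENNReal}
    (hb : ∀ x, ν (ball x r) = b) : b ≠ 0 := by
  rintro rfl
  refine hν (Measure.measure_univ_eq_zero.1 (measure_null_of_locally_null _ fun x _ => ?_))
  exact ⟨ball x r, mem_nhdsWithin_of_mem_nhds (ball_mem_nhds x hr), hb x⟩

/-- **Christensen's theorem**: two nonzero finite measures for which the measure of a ball depends
only on its radius are proportional. -/
theorem exists_eq_smul_of_measure_ball_eq {X : Type*} [PseudoMetricSpace X]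
    [MeasurableSpace X] [BorelSpace X] [SecondCountableTopology X]
    (μ ν : Measure X) [IsFiniteMeasure μ] [IsFiniteMeasure ν] (hμ0 : μ ≠ 0) (hν0 : ν ≠ 0)
    (hμ : ∀ r x y, μ (ball x r) = μ (ball y r)) (hν : ∀ r x y, ν (ball x r) = ν (ball y r)) :
    ∃ K : ENNReal, K ≠ 0 ∧ K ≠ ⊤ ∧ μ = K • ν := by
  obtain ⟨x₀⟩ : Nonempty X := by
    by_contra h
    rw [not_nonempty_iff] at h
    exact hμ0 (Measure.eq_zero_of_isEmpty μ)
  have hr0 : ∀ n : ℕ, 0 < 1 / ((n : ℝ) + 1) := fun n => by positivity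
  obtain ⟨K, φ, hφ, hK⟩ := CompactSpace.tendsto_subseq (X := ENNReal)
    fun n : ℕ => μ (ball x₀ (1 / ((n : ℝ) + 1))) / ν (ball x₀ (1 / ((n : ℝ) + 1)))
  have hr : Tendsto (fun n => 1 / ((φ n : ℝ) + 1)) atTop (𝓝 0) :=
    tendsto_one_div_add_atTop_nhds_zero_nat.comp hφ.tendsto_atTop
  have hμb : ∀ n, μ (ball x₀ (1 / ((φ n : ℝ) + 1))) ≠ 0 := fun n =>
    measure_ball_ne_zero_of_forall_eq hμ0 (hr0 _) fun x => hμ _ x x₀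
  have hνb : ∀ n, ν (ball x₀ (1 / ((φ n : ℝ) + 1))) ≠ 0 := fun n =>
    measure_ball_ne_zero_of_forall_eq hν0 (hr0 _) fun x => hν _ x x₀
  have hle : ∀ U : Set X, IsOpen U → μ U ≤ K * ν U := fun U hU =>
    measure_le_mul_of_tendsto_measure_ball_div μ ν hr (fun n x => hμ _ x x₀) (fun n x => hν _ x x₀)
      hνb (fun n => measure_ne_top _ _) hK hU
  have hge : ∀ U : Set X, IsOpen U → ν U ≤ K⁻¹ * μ U := fun U hU => by
    refine measure_le_mul_of_tendsto_measure_ball_div ν μ hr (fun n x => hν _ x x₀)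
      (fun n x => hμ _ x x₀) hμb (fun n => measure_ne_top _ _) ?_ hU
    refine hK.inv.congr fun n => ?_
    exact ENNReal.inv_div (Or.inl (measure_ne_top _ _)) (Or.inl (hνb n))
  have hK0 : K ≠ 0 := by
    rintro rfl
    exact hμ0 (Measure.measure_univ_eq_zero.1 (by simpa using hle _ isOpen_univ))
  have hKt : K ≠ ⊤ := by
    rintro rfl
    exact hν0 (Measure.measure_univ_eq_zero.1 (by simpa using hge _ isOpen_univ))
  have heq : ∀ U : Set X, IsOpen U → μ U = (K • ν) U := fun U hU => by
    refine le_antisymm (hle U hU) ?_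
    calc K * ν U ≤ K * (K⁻¹ * μ U) := by gcongr; exact hge U hU
      _ = μ U := by rw [← mul_assoc, ENNReal.mul_inv_cancel hK0 hKt, one_mul]
  refine ⟨K, hK0, hKt, ext_of_generate_finite _ BorelSpace.measurable_eq isPiSystem_isOpen heq
    (heq _ isOpen_univ)⟩

section sphere
variable {E : Type*} [NormedAddCommGroup E] [InnerProductSpace ℝ E]

/-- A linear isometry equivalence acts on the unit sphere. -/
def LinearIsometryEquiv.sphereIsometryEquiv (e : E ≃ₗᵢ[ℝ] E) :
    sphere (0 : E) 1 ≃ᵢ sphere (0 : E) 1 where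
  toFun x := ⟨e x, by simp⟩
  invFun x := ⟨e.symm x, by simp⟩
  left_inv x := by simp
  right_inv x := by simp
  isometry_toFun x y := by simp [Subtype.edist_eq]

theorem exists_linearIsometryEquiv_sphere (x y : sphere (0 : E) 1) :
    ∃ e : E ≃ₗᵢ[ℝ] E, e.sphereIsometryEquiv x = y :=
  ⟨(ℝ ∙ ((x : E) - y))ᗮ.reflection, Subtype.ext (Submodule.reflection_sub (by simp))⟩

variable [MeasurableSpace E] [BorelSpace E]

theorem hausdorffMeasure_ball_sphere_eq (s r : ℝ) (x y : sphere (0 : E) 1) :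
    μH[s] (ball x r) = μH[s] (ball y r) := by
  obtain ⟨e, rfl⟩ := exists_linearIsometryEquiv_sphere x y
  rw [← IsometryEquiv.image_ball, IsometryEquiv.hausdorffMeasure_image]

variable [FiniteDimensional ℝ E]

theorem toSphere_ball_eq (r : ℝ) (x y : sphere (0 : E) 1) :
    (volume : Measure E).toSphere (ball x r) = (volume : Measure E).toSphere (ball y r) := by
  obtain ⟨e, rfl⟩ := exists_linearIsometryEquiv_sphere x y
  rw [← IsometryEquiv.image_ball, Measure.toSphere_apply' _ measurableSet_ball,
    Measure.toSphere_apply' _ (by rw [IsometryEquiv.image_ball]; exact measurableSet_ball)]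
  have : Set.Ioo (0 : ℝ) 1 • ((↑) '' (e.sphereIsometryEquiv '' ball x r) : Set E) =
      e '' (Set.Ioo (0 : ℝ) 1 • ((↑) '' ball x r : Set E)) := by
    ext z
    simp only [Set.mem_smul, Set.mem_image]
    constructor
    · rintro ⟨a, ha, _, ⟨_, ⟨w, hw, rfl⟩, rfl⟩, rfl⟩
      exact ⟨a • (w : E), ⟨a, ha, w, ⟨w, hw, rfl⟩, rfl⟩, map_smul e a _⟩
    · rintro ⟨_, ⟨a, ha, _, ⟨w, hw, rfl⟩, rfl⟩, rfl⟩
      exact ⟨a, ha, _, ⟨_, ⟨w, hw, rfl⟩, rfl⟩, (map_smul e a _).symm⟩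
  rw [this, ← e.measurePreserving.measure_preimage_emb e.toHomeomorph.measurableEmbedding (e '' _),
    e.injective.preimage_image]

theorem hausdorffMeasure_sphere_lt_top_s4 :
    μH[(Module.finrank ℝ E : ℝ) - 1] (Set.univ : Set (sphere (0 : E) 1)) < ⊤ := by
  refine isCompact_univ.measure_lt_top_of_nhdsWithin fun x _ => ?_
  have hv : ‖(-x : E)‖ = 1 := by simp
  have hx0 : (x : E) ≠ 0 := fun h => by simpa [h] using norm_eq_of_mem_sphere x
  have hfr : (Module.finrank ℝ (ℝ ∙ (-x : E))ᗮ : ℝ) = Module.finrank ℝ E - 1 := by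
    have := Submodule.finrank_add_finrank_orthogonal (ℝ ∙ (-x : E))
    rw [finrank_span_singleton (neg_ne_zero.2 hx0)] at this
    rw [← this]; push_cast; ring
  rw [nhdsWithin_univ, ← hfr]
  have hC : ContDiff ℝ 1 (stereoInvFunAux (-x : E) ∘ ((↑) : (ℝ ∙ (-x : E))ᗮ → E)) :=
    contDiff_stereoInvFunAux.comp (ℝ ∙ (-x : E))ᗮ.subtypeL.contDiff
  obtain ⟨K, t, ht, hL⟩ := (hC.contDiffAt (x := 0)).exists_lipschitzOnWith
  obtain ⟨ε, hε, hεt⟩ := nhds_basis_closedBall.mem_iff.1 ht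
  have hL' : LipschitzOnWith K (stereographic hv).symm (closedBall 0 ε) := fun a ha b hb =>
    hL (hεt ha) (hεt hb)
  refine ⟨(stereographic hv).symm '' closedBall 0 ε, ?_, ?_⟩
  · have h0 : (stereographic hv).symm 0 = x := by
      ext1
      change stereoInvFunAux (-x : E) _ = _
      simp
    simpa only [h0] using (isOpenEmbedding_stereographic_symm hv).isOpenMap.image_mem_nhds
      (closedBall_mem_nhds 0 hε)
  · refine (hL'.hausdorffMeasure_image_le (by positivity)).trans_lt ?_
    exact ENNReal.mul_lt_top (by simp) (isCompact_closedBall _ _).measure_lt_top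

theorem hausdorffMeasure_sphere_ne_zero [Nontrivial E] :
    μH[(Module.finrank ℝ E : ℝ) - 1] (sphere (0 : E) 1) ≠ 0 := by
  obtain ⟨x, hx⟩ := exists_norm_eq E zero_le_one
  have hx0 : x ≠ 0 := fun h => by simp [h] at hx
  have hfr : (Module.finrank ℝ (ℝ ∙ x)ᗮ : ℝ) = Module.finrank ℝ E - 1 := by
    have := Submodule.finrank_add_finrank_orthogonal (ℝ ∙ x)
    rw [finrank_span_singleton hx0] at this
    rw [← this]; push_cast; ring
  rw [← hfr]
  have hsub : ball (0 : (ℝ ∙ x)ᗮ) 1 ⊆ (ℝ ∙ x)ᗮ.orthogonalProjectionOnto '' sphere (0 : E) 1 := by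
    intro w hw
    have hw1 : ‖(w : E)‖ < 1 := by simpa using hw
    have hwx : inner ℝ (w : E) x = 0 := Submodule.mem_orthogonal_singleton_iff_inner_left.1 w.2
    refine ⟨w + √(1 - ‖(w : E)‖ ^ 2) • x, ?_, ?_⟩
    · have hs : 0 ≤ 1 - ‖(w : E)‖ ^ 2 := by nlinarith [norm_nonneg (w : E)]
      rw [mem_sphere_zero_iff_norm, ← sq_eq_sq₀ (norm_nonneg _) zero_le_one, norm_add_sq_real,
        inner_smul_right, hwx, norm_smul, hx, mul_one, Real.norm_eq_abs, sq_abs, Real.sq_sqrt hs]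
      ring
    · rw [map_add, map_smul,
        Submodule.orthogonalProjectionOnto_orthogonalComplement_singleton_eq_zero]
      simp
  have hpos : 0 < μH[(Module.finrank ℝ (ℝ ∙ x)ᗮ : ℝ)] (ball (0 : (ℝ ∙ x)ᗮ) 1) :=
    measure_ball_pos _ _ one_pos
  refine (hpos.trans_le ((measure_mono hsub).trans ?_)).ne'
  exact hausdorffMeasure_orthogonalProjectionOnto_le _ _ _ (by positivity)

theorem exists_toSphere_eq_smul_hausdorffMeasure [Nontrivial E] :
    ∃ K : ENNReal, K ≠ 0 ∧ K ≠ ⊤ ∧ (volume : Measure E).toSphere =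
      K • (μH[(Module.finrank ℝ E : ℝ) - 1] : Measure (sphere (0 : E) 1)) := by
  have hfr : (0 : ℝ) ≤ (Module.finrank ℝ E : ℝ) - 1 :=
    sub_nonneg.2 (by exact_mod_cast Module.finrank_pos (R := ℝ) (M := E))
  have : IsFiniteMeasure (μH[(Module.finrank ℝ E : ℝ) - 1] : Measure (sphere (0 : E) 1)) :=
    ⟨hausdorffMeasure_sphere_lt_top_s4⟩
  refine exists_eq_smul_of_measure_ball_eq _ _ (Measure.toSphere_ne_zero _) (fun h => ?_)
    toSphere_ball_eq (hausdorffMeasure_ball_sphere_eq _)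
  refine hausdorffMeasure_sphere_ne_zero (E := E) ?_
  have himg := (isometry_subtype_coe (s := sphere (0 : E) 1)).hausdorffMeasure_image
    (Or.inl hfr) Set.univ
  rw [Set.image_univ, Subtype.range_coe] at himg
  rw [himg, h]
  simp

/-- Integration in polar coordinates. -/
theorem lintegral_eq_lintegral_toSphere [Nontrivial E] {f : E → ENNReal} (hf : Measurable f) :
    ∫⁻ x, f x = ∫⁻ ζ, ∫⁻ r in Set.Ioi (0 : ℝ),
      ENNReal.ofReal (r ^ (Module.finrank ℝ E - 1)) * f (r • (ζ : E))
        ∂volume ∂(volume : Measure E).toSphere := by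
  have hmp := (volume : Measure E).measurePreserving_homeomorphUnitSphereProd
  have hsymm := hmp.symm (homeomorphUnitSphereProd E).toMeasurableEquiv
  have hc : MeasurableSet ({0}ᶜ : Set E) := (measurableSet_singleton _).compl
  calc ∫⁻ x, f x = ∫⁻ x in ({0}ᶜ : Set E), f x := by rw [restrict_compl_singleton]
    _ = ∫⁻ x : ({0}ᶜ : Set E), f x ∂(volume.comap Subtype.val) := (lintegral_subtype_comap hc f).symm
    _ = ∫⁻ q, f ((homeomorphUnitSphereProd E).symm q)
          ∂((volume : Measure E).toSphere.prod (Measure.volumeIoiPow (Module.finrank ℝ E - 1))) :=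
        (hsymm.lintegral_comp (hf.comp measurable_subtype_coe)).symm
    _ = _ := by
      have hm : Measurable fun q => f ((homeomorphUnitSphereProd E).symm q) :=
        hf.comp (measurable_subtype_coe.comp (homeomorphUnitSphereProd E).symm.measurable)
      rw [lintegral_prod _ hm.aemeasurable]
      refine lintegral_congr fun ζ => ?_
      simp only [homeomorphUnitSphereProd_symm_apply_coe]
      rw [Measure.volumeIoiPow, lintegral_withDensity_eq_lintegral_mul _ (by fun_prop)
        (by fun_prop), ← lintegral_subtype_comap measurableSet_Ioi]
      rfl

end sphere

theorem sphereUniform_eq_smul_map (d : ℕ) (hd : 1 ≤ d) :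
    sphereUniform d = (μH[(d : ℝ) - 1] (sphere (0 : EuclideanSpace ℝ (Fin d)) 1))⁻¹ •
      (μH[(d : ℝ) - 1] : Measure (sphere (0 : EuclideanSpace ℝ (Fin d)) 1)).map (↑) := by
  rw [sphereUniform, (isometry_subtype_coe).map_hausdorffMeasure
    (Or.inl (sub_nonneg.2 (by exact_mod_cast hd))), Subtype.range_coe]

theorem lintegral_pow_mul_exp_neg_mul_sq {d : ℕ} (hd : 1 ≤ d) {a q : ℝ} (ha : 0 ≤ a) (hq : 0 < q) :
    ∫⁻ r in Set.Ioi (0 : ℝ), ENNReal.ofReal (r ^ (d - 1)) *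
      ENNReal.ofReal (a * r * Real.exp (-(1 / 2) * (r ^ 2 * q))) =
    ENNReal.ofReal (a * ((1 / 2) ^ (-((d : ℝ) + 1) / 2) * (1 / 2) * Gamma (((d : ℝ) + 1) / 2)) *
      q ^ (-((d : ℝ) + 1) / 2)) := by
  have hd1 : (-1 : ℝ) < d := by linarith [(Nat.cast_nonneg d : (0 : ℝ) ≤ d)]
  have hq2 : 0 < 1 / 2 * q := by positivity
  have hI := integral_rpow_mul_exp_neg_mul_rpow two_pos hd1 hq2
  have hint := integrableOn_rpow_mul_exp_neg_mul_rpow hd1 two_pos hq2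
  calc _ = ∫⁻ r in Set.Ioi (0 : ℝ), ENNReal.ofReal
        (a * (r ^ (d : ℝ) * Real.exp (-(1 / 2 * q) * r ^ (2 : ℝ)))) := by
        refine setLIntegral_congr_fun measurableSet_Ioi fun r hr => ?_
        have hr : 0 < r := hr
        rw [← ENNReal.ofReal_mul (by positivity), Real.rpow_natCast, Real.rpow_two,
          ← mul_pow_sub_one (by lia : d ≠ 0) r]
        ring_nf
    _ = _ := by
        rw [← ofReal_integral_eq_lintegral_ofReal (hint.const_mul a), integral_const_mul, hI,
          Real.mul_rpow (by norm_num) hq.le]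
        · ring_nf
        · filter_upwards [ae_restrict_mem measurableSet_Ioi] with r hr
          have hr : 0 < r := hr
          positivity

end

/-- the push-forward under `x ↦ x/‖x‖` of the probability measure with
density `p(x) = c ‖x‖ (2π)^{-d/2} (det Λ)^{-1/2} exp(-½ xᵀΛ^{-1}x)` (w.r.t. Lebesgue
measure on `ℝ^d`) is absolutely continuous w.r.t. the uniform probability measure `η` on
`S^{d-1}` with density proportional to `ζ ↦ (ζᵀΛ^{-1}ζ)^{-(d+1)/2}`. -/
theorem pushforward_normalized_density (d : ℕ) (hd : 2 ≤ d)
    (Λ : Matrix (Fin d) (Fin d) ℝ) (hΛ : Λ.PosDef) (c : ℝ) (hc : 0 < c)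
    (p : EuclideanSpace ℝ (Fin d) → ℝ)
    (hp : ∀ x, p x = c * ‖x‖ * (2 * π) ^ (-(d : ℝ) / 2) * (Λ.det) ^ (-(1 : ℝ) / 2) *
      Real.exp (-(1 / 2) * ((fun i => x i) ⬝ᵥ (Λ⁻¹ *ᵥ fun i => x i))))
    (hprob : ∫ x, p x = 1) :
    ∃ C : ℝ, 0 < C ∧
      Measure.map (fun x : EuclideanSpace ℝ (Fin d) => ‖x‖⁻¹ • x)
          (volume.withDensity fun x => ENNReal.ofReal (p x)) =
        (sphereUniform d).withDensity
          (fun ζ => ENNReal.ofReal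
            (C * ((fun i => ζ i) ⬝ᵥ (Λ⁻¹ *ᵥ fun i => ζ i)) ^ (-((d : ℝ) + 1) / 2))) := by
  have : Nonempty (Fin d) := ⟨⟨0, by lia⟩⟩
  have hd1 : 1 ≤ d := by lia
  obtain ⟨K, hK0, hKt, hK⟩ :=
    exists_toSphere_eq_smul_hausdorffMeasure (E := EuclideanSpace ℝ (Fin d))
  have hm0 := hausdorffMeasure_sphere_ne_zero (E := EuclideanSpace ℝ (Fin d))
  have hmt := hausdorffMeasure_sphere_lt_top_s4 (E := EuclideanSpace ℝ (Fin d))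
  rw [← (isometry_subtype_coe).hausdorffMeasure_image (Or.inl (by simpa using hd1)),
    Set.image_univ, Subtype.range_coe] at hmt
  rw [finrank_euclideanSpace_fin] at hK hm0 hmt
  have hη := sphereUniform_eq_smul_map d hd1
  set m := μH[(d : ℝ) - 1] (Metric.sphere (0 : EuclideanSpace ℝ (Fin d)) 1)
  set a : ℝ := c * (2 * π) ^ (-(d : ℝ) / 2) * (Λ.det) ^ (-(1 : ℝ) / 2) with ha_def
  have ha : 0 < a := by
    have := hΛ.det_pos
    positivity
  set B : ℝ := a * ((1 / 2) ^ (-((d : ℝ) + 1) / 2) * (1 / 2) * Gamma (((d : ℝ) + 1) / 2))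
  have hB : 0 < B := by
    have : 0 < Gamma (((d : ℝ) + 1) / 2) := Gamma_pos_of_pos (by positivity)
    positivity
  set q : EuclideanSpace ℝ (Fin d) → ℝ :=
    fun x => (fun i => x i) ⬝ᵥ (Λ⁻¹ *ᵥ fun i => x i) with hq_def
  have hq_cont : Continuous q := by
    simp only [hq_def, dotProduct, mulVec]
    fun_prop
  have hq_pos : ∀ ζ : Metric.sphere (0 : EuclideanSpace ℝ (Fin d)) 1, 0 < q ζ := fun ζ => by
    have hne : (fun i => (ζ : EuclideanSpace ℝ (Fin d)) i) ≠ 0 := fun h => by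
      have h0 : (ζ : EuclideanSpace ℝ (Fin d)) = 0 := by ext i; exact congrFun h i
      simpa [h0] using norm_eq_of_mem_sphere ζ
    simpa using hΛ.inv.dotProduct_mulVec_pos hne
  have hq_smul : ∀ (r : ℝ) x, q (r • x) = r ^ 2 * q x := fun r x => by
    have : (fun i => (r • x) i) = r • fun i => x i := rfl
    simp only [hq_def, this, mulVec_smul, dotProduct_smul, smul_dotProduct, smul_eq_mul]
    ring
  have hp' : ∀ x, p x = a * ‖x‖ * Real.exp (-(1 / 2) * q x) := fun x => by
    rw [hp, ha_def]; ring
  have hp_meas : Measurable p := by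
    rw [funext hp']
    fun_prop
  have hT : Measurable fun x : EuclideanSpace ℝ (Fin d) => ‖x‖⁻¹ • x := by fun_prop
  have hκ0 : 0 < (K * m).toReal :=
    ENNReal.toReal_pos (mul_ne_zero hK0 hm0) (ENNReal.mul_ne_top hKt hmt.ne)
  refine ⟨(K * m).toReal * B, mul_pos hκ0 hB, ?_⟩
  change _ = (sphereUniform d).withDensity fun ζ => ENNReal.ofReal
    ((K * m).toReal * B * q ζ ^ (-((d : ℝ) + 1) / 2))
  refine Measure.ext_of_lintegral _ fun g hg => ?_
  have hD : Measurable fun ζ => ENNReal.ofReal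
      ((K * m).toReal * B * q ζ ^ (-((d : ℝ) + 1) / 2)) := by fun_prop
  rw [lintegral_map hg hT, lintegral_withDensity_eq_lintegral_mul _ (by fun_prop) (by fun_prop),
    lintegral_withDensity_eq_lintegral_mul _ hD hg, hη, lintegral_smul_measure,
    lintegral_map (hD.mul hg) measurable_subtype_coe, lintegral_eq_lintegral_toSphere (by fun_prop),
    hK, lintegral_smul_measure, smul_eq_mul, smul_eq_mul,
    ← lintegral_const_mul' _ _ hKt, ← lintegral_const_mul' _ _ (ENNReal.inv_ne_top.2 hm0)]
  refine lintegral_congr fun ζ => ?_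
  have hinner : ∫⁻ r in Set.Ioi (0 : ℝ),
      ENNReal.ofReal (r ^ (Module.finrank ℝ (EuclideanSpace ℝ (Fin d)) - 1)) *
        ((fun x => ENNReal.ofReal (p x)) * fun x => g (‖x‖⁻¹ • x))
          (r • (ζ : EuclideanSpace ℝ (Fin d))) =
      ENNReal.ofReal (B * q ζ ^ (-((d : ℝ) + 1) / 2)) * g ζ := by
    rw [← lintegral_pow_mul_exp_neg_mul_sq hd1 ha.le (hq_pos ζ),
      ← lintegral_mul_const _ (by fun_prop)]
    refine setLIntegral_congr_fun measurableSet_Ioi fun r hr => ?_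
    have hr : 0 < r := hr
    have hnorm : ‖r • (ζ : EuclideanSpace ℝ (Fin d))‖ = r := by
      rw [norm_smul, norm_eq_of_mem_sphere, mul_one, Real.norm_of_nonneg hr.le]
    simp only [Pi.mul_apply, hnorm, hp', hq_smul, smul_smul, inv_mul_cancel₀ hr.ne', one_smul,
      finrank_euclideanSpace_fin, mul_assoc]
  refine (congrArg (K * ·) hinner).trans ?_
  rw [Pi.mul_apply, mul_assoc (K * m).toReal, ENNReal.ofReal_mul hκ0.le,
    ENNReal.ofReal_toReal (ENNReal.mul_ne_top hKt hmt.ne)]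
  rw [show m⁻¹ * (K * m * ENNReal.ofReal (B * q ζ ^ (-((d : ℝ) + 1) / 2)) * g ζ) =
    m⁻¹ * m * (K * (ENNReal.ofReal (B * q ζ ^ (-((d : ℝ) + 1) / 2)) * g ζ)) by ring,
    ENNReal.inv_mul_cancel hm0 hmt.ne, one_mul]
end
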